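/- Let d ≥ 2 and let θ: [0,∞) → [0,∞) be nondecreasing, doubling and satisfy the Dini condition. Let φ: ℝ^{d-1} → ℝ be C¹ with φ(0) = 0, ∇φ(0) = 0 and |∇φ(x) − ∇φ(y)| ≤ θ(|x−y|); let D = {(x,t) : t > φ(x)}. Let u be harmonic on D ∩ B_{5R₀}(0), continuous on the closure, vanishing on ∂D ∩ B_{5R₀}(0), not identically zero, and suppose there exist an integer N₀ ≥ 1, a nonzero homogeneous harmonic polynomial P of degree N₀, R > 0 and C > 0 with |u(X) − P(X)| ≤ C|X|^{N₀} θ̃(2|X|) for all X ∈ D ∩ B_R(0), where θ̃(r) := θ(4r) + ∫₀^{4r} θ(s)/s ds + r∫_{4r}^{2R} θ(s)/s² ds. For 0 < r < R define T_r u(Z) := u(rZ) / ( r^{−d} ∫_{B_r(0) ∩ D} u(Y)² dY )^{1/2} for Z ∈ B_1(0) ∩ (D/r). Then, with c := ( ∫_{B_1(0) ∩ {Y_d > 0}} P(Z)² dZ )^{−1/2}, there exist r₁ ∈ (0,R) and C′ > 0 such that |T_r u(Z) − c·P(Z)| ≤ C′ θ̃(r) for all 0 < r < r₁ and all Z ∈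 B_1(0) ∩ (D/r). In particular c·P is the unique tangent function of u at 0 and the convergence rate is bounded by a constant multiple of θ̃(r). -/

import Mathlib

open MeasureTheory Set Metric Filter intervalIntegral

noncomputable section

abbrev E (n : ℕ) := EuclideanSpace ℝ (Fin (n + 1))
abbrev Eb (n : ℕ) := EuclideanSpace ℝ (Fin n)

/-- last coordinate -/
def lastC {n : ℕ} (X : E n) : ℝ := X (Fin.last n)

/-- first `n` coordinates -/
def initC {n : ℕ} (X : E n) : Eb n :=
  (EuclideanSpace.equiv (Fin n) ℝ).symm (fun i => X i.castSucc)

/-- the region above the graph of `φ` -/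
def Dom {n : ℕ} (φ : Eb n → ℝ) : Set (E n) := {X | φ (initC X) < lastC X}

/-- `P` is a homogeneous harmonic polynomial of degree `N` on `ℝ^d`. -/
def IsHomHarmPoly {d : ℕ} (N : ℕ) (P : EuclideanSpace ℝ (Fin d) → ℝ) : Prop :=
  (∃ p : MvPolynomial (Fin d) ℝ, ∀ x, P x = MvPolynomial.eval (fun i => x i) p) ∧
  (∀ l : ℝ, 0 < l → ∀ x, P (l • x) = l ^ N * P x) ∧
  (∀ x, ∑ i : Fin d,
    iteratedFDeriv ℝ 2 P x ![EuclideanSpace.single i 1, EuclideanSpace.single i 1] = 0)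

/-- `u` is harmonic on `U`: `u` is `C²` on `U` and `Δu = 0` there. -/
def IsHarmonicOn {d : ℕ} (u : EuclideanSpace ℝ (Fin d) → ℝ)
    (U : Set (EuclideanSpace ℝ (Fin d))) : Prop :=
  ContDiffOn ℝ 2 u U ∧
  ∀ x ∈ U, ∑ i : Fin d,
    iteratedFDeriv ℝ 2 u x ![EuclideanSpace.single i 1, EuclideanSpace.single i 1] = 0

/-- `θ̃(r) = θ(4r) + ∫₀^{4r} θ(s)/s ds + r∫_{4r}^{2R} θ(s)/s² ds` -/
def thetaTilde (θ : ℝ → ℝ) (R : ℝ) (r : ℝ) : ℝ :=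
  θ (4 * r) + (∫ s in (0:ℝ)..(4 * r), θ s / s)
    + r * ∫ s in (4 * r)..(2 * R), θ s / s ^ 2

/-- the `L²`-normalized rescaling `T_r u(Z) = u(rZ) / (r^{−d} ∫_{B_r(0)∩D} u²)^{1/2}` -/
def rescaledU {n : ℕ} (φ : Eb n → ℝ) (u : E n → ℝ) (r : ℝ) (Z : E n) : ℝ :=
  u (r • Z) /
    Real.sqrt ((r ^ (n + 1))⁻¹ * ∫ Y in ball (0 : E n) r ∩ Dom φ, (u Y) ^ 2)

/-!
Write `v_r(Z) = u(rZ) / r ^ N`. By homogeneity of `P`, the expansion of `u` at `0` says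
`|v_r - P| ≤ K θ̃(r)` on `B₁ ∩ D/r`, because `θ̃` is nondecreasing on `[0, R/2]` and
`θ̃(2r) ≤ 34 θ̃(r)` for small `r`: the tail `r ∫_{4r}^{2R} θ(s)/s² ds` controls both `θ(8r)` and
`∫_{4r}^{8r} θ(s)/s ds`.

Since `|φ(x)| ≤ θ(|x|)|x|`, inside `B₁` the set `D/r` differs from the upper half space only in the
slab `|Y_d| ≤ θ(r)`, of measure `O(θ̃(r))`. Hence `∫ v_r² = ∫ P² + O(θ̃(r))`, the integral on
the right being over the half ball and positive because a nonzero polynomial cannot vanish on an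
open set. As `θ̃(r) → 0`, dividing `v_r` by the square root of its mass preserves the rate.
-/

open scoped Topology symmDiff

section DiniModulus

theorem tendsto_const_mul_nhdsGT_zero {c : ℝ} (hc : 0 < c) :
    Tendsto (c * ·) (𝓝[>] 0) (𝓝[>] 0) := by
  rw [tendsto_iff_comap, comap_mulLeft_nhdsGT_zero hc]

/-- A Dini modulus: nonnegative and nondecreasing on `[0, ∞)` with `∫₀¹ θ(s)/s ds < ∞`. The values
at negative arguments are unconstrained. -/
structure IsDiniModulus (θ : ℝ → ℝ) : Prop where
  nonneg : ∀ r, 0 ≤ r → 0 ≤ θ r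
  monotoneOn : MonotoneOn θ (Ici 0)
  integrableOn_div : IntegrableOn (fun s => θ s / s) (Ioc 0 1)

namespace IsDiniModulus

variable {θ : ℝ → ℝ} {R a b r : ℝ}

theorem intervalIntegrable_div_pow (hθ : IsDiniModulus θ) (ha : 0 < a) (hb : 0 < b) (k : ℕ) :
    IntervalIntegrable (fun s => θ s / s ^ k) volume a b := by
  have hpos : ∀ s ∈ uIcc a b, 0 < s := fun s hs => (lt_min ha hb).trans_le hs.1
  have hθint : IntervalIntegrable θ volume a b :=
    (hθ.monotoneOn.mono fun s hs => (hpos s hs).le).intervalIntegrable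
  simpa only [div_eq_mul_inv] using hθint.mul_continuousOn (g := fun s => (s ^ k)⁻¹)
    (ContinuousOn.inv₀ (by fun_prop) fun s hs => (pow_pos (hpos s hs) k).ne')

theorem intervalIntegrable_div (hθ : IsDiniModulus θ) (ha : 0 ≤ a) (hb : 0 ≤ b) :
    IntervalIntegrable (fun s => θ s / s) volume a b := by
  have from_zero : ∀ c, 0 ≤ c → IntervalIntegrable (fun s => θ s / s) volume 0 c := by
    intro c hc
    rcases hc.eq_or_lt with rfl | hc
    · exact IntervalIntegrable.refl
    · have near : IntervalIntegrable (fun s => θ s / s) volume 0 1 :=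
        (intervalIntegrable_iff_integrableOn_Ioc_of_le zero_le_one).2 hθ.integrableOn_div
      exact near.trans (by simpa using hθ.intervalIntegrable_div_pow one_pos hc 1)
  exact (from_zero a ha).symm.trans (from_zero b hb)

theorem integral_div_pow_nonneg (hθ : IsDiniModulus θ) (ha : 0 ≤ a) (hab : a ≤ b) (k : ℕ) :
    0 ≤ ∫ s in a..b, θ s / s ^ k :=
  intervalIntegral.integral_nonneg hab fun s hs =>
    have hs : 0 ≤ s := ha.trans hs.1
    div_nonneg (hθ.nonneg s hs) (pow_nonneg hs k)

theorem integral_div_nonneg (hθ : IsDiniModulus θ) (ha : 0 ≤ a) (hab : a ≤ b) :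
    0 ≤ ∫ s in a..b, θ s / s := by
  simpa only [pow_one] using hθ.integral_div_pow_nonneg ha hab 1

theorem mul_integral_div_sq_le_integral_div (hθ : IsDiniModulus θ) (ha : 0 < a) (hab : a ≤ b) :
    a * ∫ s in a..b, θ s / s ^ 2 ≤ ∫ s in a..b, θ s / s := by
  have hb : 0 < b := ha.trans_le hab
  rw [← intervalIntegral.integral_const_mul]
  refine integral_mono_on hab ((hθ.intervalIntegrable_div_pow ha hb 2).const_mul a)
    (hθ.intervalIntegrable_div ha.le hb.le) fun s hs => ?_
  have hs0 : 0 < s := ha.trans_le hs.1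
  calc a * (θ s / s ^ 2) = a / s * (θ s / s) := by field_simp
    _ ≤ θ s / s := mul_le_of_le_one_left (div_nonneg (hθ.nonneg s hs0.le) hs0.le)
        ((div_le_one hs0).2 hs.1)

theorem integral_div_le_mul_integral_div_sq (hθ : IsDiniModulus θ) (ha : 0 < a) (hab : a ≤ b) :
    ∫ s in a..b, θ s / s ≤ b * ∫ s in a..b, θ s / s ^ 2 := by
  have hb : 0 < b := ha.trans_le hab
  rw [← intervalIntegral.integral_const_mul]
  refine integral_mono_on hab (hθ.intervalIntegrable_div ha.le hb.le)
    ((hθ.intervalIntegrable_div_pow ha hb 2).const_mul b) fun s hs => ?_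
  have hs0 : 0 < s := ha.trans_le hs.1
  calc θ s / s ≤ b / s * (θ s / s) :=
        le_mul_of_one_le_left (div_nonneg (hθ.nonneg s hs0.le) hs0.le) ((one_le_div hs0).2 hs.2)
    _ = b * (θ s / s ^ 2) := by field_simp

theorem le_two_mul_integral_div (hθ : IsDiniModulus θ) (ha : 0 < a) :
    θ a ≤ 2 * ∫ s in a..2 * a, θ s / s := by
  have mono : ∫ _s in a..2 * a, θ a / (2 * a) ≤ ∫ s in a..2 * a, θ s / s := by
    refine integral_mono_on (by linarith) (by simp)
      (hθ.intervalIntegrable_div ha.le (by positivity)) fun s hs => ?_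
    have hs0 : 0 < s := ha.trans_le hs.1
    exact div_le_div₀ (hθ.nonneg s hs0.le) (hθ.monotoneOn ha.le hs0.le hs.1) hs0 hs.2
  calc θ a = 2 * ∫ _s in a..2 * a, θ a / (2 * a) := by
        rw [intervalIntegral.integral_const, smul_eq_mul]
        field_simp
        ring
    _ ≤ 2 * ∫ s in a..2 * a, θ s / s := by gcongr

theorem tendsto_integral_div (hθ : IsDiniModulus θ) :
    Tendsto (fun r => ∫ s in (0 : ℝ)..r, θ s / s) (𝓝[>] 0) (𝓝 0) := by
  have cont : ContinuousOn (fun r => ∫ s in (0 : ℝ)..r, θ s / s) (uIcc 0 1) :=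
    continuousOn_primitive_interval' (hθ.intervalIntegrable_div le_rfl zero_le_one) left_mem_uIcc
  have lim := (cont 0 left_mem_uIcc).tendsto
  rw [integral_same, uIcc_of_le zero_le_one] at lim
  exact lim.mono_left (nhdsWithin_le_of_mem (Icc_mem_nhdsGT zero_lt_one))

theorem tendsto_nhdsGT_zero (hθ : IsDiniModulus θ) : Tendsto θ (𝓝[>] 0) (𝓝 0) := by
  have upper : Tendsto (fun r => 2 * ∫ s in (0 : ℝ)..2 * r, θ s / s) (𝓝[>] 0) (𝓝 0) := by
    simpa using (hθ.tendsto_integral_div.comp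
      (tendsto_const_mul_nhdsGT_zero two_pos)).const_mul 2
  refine tendsto_of_tendsto_of_tendsto_of_le_of_le' tendsto_const_nhds upper ?_ ?_ <;>
    filter_upwards [self_mem_nhdsWithin] with r (hr : 0 < r)
  · exact hθ.nonneg r hr.le
  · have split := integral_add_adjacent_intervals (hθ.intervalIntegrable_div le_rfl hr.le)
      (hθ.intervalIntegrable_div hr.le (by positivity : 0 ≤ 2 * r))
    linarith [hθ.le_two_mul_integral_div hr, hθ.integral_div_nonneg le_rfl hr.le]

theorem tendsto_mul_integral_div_sq (hθ : IsDiniModulus θ) (hb : 0 < b) :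
    Tendsto (fun r => r * ∫ s in r..b, θ s / s ^ 2) (𝓝[>] 0) (𝓝 0) := by
  have hint : IntegrableOn (fun s => θ s / s) (Ioc 0 b) :=
    (intervalIntegrable_iff_integrableOn_Ioc_of_le hb.le).1
      (hθ.intervalIntegrable_div le_rfl hb.le)
  -- On `(r, b]` the integrand is `θ(s)/s · r/s`, dominated by `θ(s)/s`.
  have eq_indicator : ∀ᶠ r in 𝓝[>] (0 : ℝ),
      ∫ s in Ioc 0 b, (Ioi r).indicator (fun s => θ s / s * (r / s)) s =
        r * ∫ s in r..b, θ s / s ^ 2 := by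
    filter_upwards [Ioo_mem_nhdsGT hb] with r hr
    rw [setIntegral_indicator measurableSet_Ioi, Ioc_inter_Ioi, max_eq_right hr.1.le,
      integral_of_le hr.2.le, ← MeasureTheory.integral_const_mul]
    congr 1 with s
    ring
  suffices lim : Tendsto
      (fun r => ∫ s in Ioc 0 b, (Ioi r).indicator (fun s => θ s / s * (r / s)) s)
      (𝓝[>] 0) (𝓝 (∫ _s in Ioc 0 b, (0 : ℝ))) by
    rw [MeasureTheory.integral_zero] at lim
    exact lim.congr' eq_indicator
  refine MeasureTheory.tendsto_integral_filter_of_dominated_convergence (fun s => θ s / s)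
    (.of_forall fun r => ?_) ?_ hint ?_
  · exact (hint.aestronglyMeasurable.mul
      (by fun_prop : Measurable fun s => r / s).aestronglyMeasurable).indicator measurableSet_Ioi
  · filter_upwards [self_mem_nhdsWithin] with r (hr : 0 < r)
    filter_upwards [ae_restrict_mem measurableSet_Ioc] with s hs
    have hdiv : 0 ≤ θ s / s := div_nonneg (hθ.nonneg s hs.1.le) hs.1.le
    by_cases hrs : s ∈ Ioi r
    · rw [indicator_of_mem hrs, Real.norm_of_nonneg (mul_nonneg hdiv (div_pos hr hs.1).le)]
      exact mul_le_of_le_one_right hdiv ((div_le_one hs.1).2 (mem_Ioi.1 hrs).le)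
    · rwa [indicator_of_notMem hrs, norm_zero]
  · filter_upwards [ae_restrict_mem measurableSet_Ioc] with s hs
    have lim : Tendsto (fun r => θ s / s * (r / s)) (𝓝[>] 0) (𝓝 0) := by
      simpa using (((continuous_id.div_const s).const_mul (θ s / s)).tendsto 0).mono_left
        nhdsWithin_le_nhds
    refine lim.congr' ?_
    filter_upwards [Ioo_mem_nhdsGT hs.1] with r hr
    exact (indicator_of_mem (mem_Ioi.2 hr.2) (fun s => θ s / s * (r / s))).symm

theorem tendsto_thetaTilde (hθ : IsDiniModulus θ) (hR : 0 < R) :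
    Tendsto (thetaTilde θ R) (𝓝[>] 0) (𝓝 0) := by
  have scale := tendsto_const_mul_nhdsGT_zero (c := 4) (by norm_num)
  have tail := ((hθ.tendsto_mul_integral_div_sq (b := 2 * R) (by positivity)).comp
    scale).const_mul (1 / 4)
  have sum := ((hθ.tendsto_nhdsGT_zero.comp scale).add
    (hθ.tendsto_integral_div.comp scale)).add tail
  simp only [mul_zero, add_zero] at sum
  refine sum.congr fun r => ?_
  simp only [thetaTilde, Function.comp_apply]
  ring

theorem le_thetaTilde (hθ : IsDiniModulus θ) (hr : 0 ≤ r) (hrR : r ≤ R / 2) :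
    θ r ≤ thetaTilde θ R r := by
  have h4r : 0 ≤ 4 * r := by positivity
  have mono : θ r ≤ θ (4 * r) := hθ.monotoneOn hr h4r (by linarith)
  have head := hθ.integral_div_nonneg le_rfl h4r
  have tail := mul_nonneg hr (hθ.integral_div_pow_nonneg h4r (by linarith : 4 * r ≤ 2 * R) 2)
  rw [thetaTilde]
  linarith

theorem thetaTilde_nonneg (hθ : IsDiniModulus θ) (hr : 0 ≤ r) (hrR : r ≤ R / 2) :
    0 ≤ thetaTilde θ R r :=
  (hθ.nonneg r hr).trans (hθ.le_thetaTilde hr hrR)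

theorem monotoneOn_thetaTilde (hθ : IsDiniModulus θ) :
    MonotoneOn (thetaTilde θ R) (Icc 0 (R / 2)) := by
  rintro a ⟨ha, -⟩ b ⟨hb, hbR⟩ hab
  rcases ha.eq_or_lt with rfl | ha
  · have at_zero : thetaTilde θ R 0 = θ 0 := by simp [thetaTilde]
    rw [at_zero]
    exact (hθ.monotoneOn self_mem_Ici hb hab).trans (hθ.le_thetaTilde hb hbR)
  have ha4 : 0 < 4 * a := by positivity
  have hb4 : 0 < 4 * b := by linarith
  have hab4 : 4 * a ≤ 4 * b := by linarith
  have hbR4 : 4 * b ≤ 2 * R := by linarith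
  have head := integral_add_adjacent_intervals (hθ.intervalIntegrable_div le_rfl ha4.le)
    (hθ.intervalIntegrable_div ha4.le hb4.le)
  have tail := integral_add_adjacent_intervals (hθ.intervalIntegrable_div_pow ha4 hb4 2)
    (hθ.intervalIntegrable_div_pow hb4 (hb4.trans_le hbR4) 2)
  have value_le : θ (4 * a) ≤ θ (4 * b) := hθ.monotoneOn ha4.le hb4.le hab4
  -- What the tail loses between `4a` and `4b` is regained by the Dini integral.
  have middle_le := hθ.mul_integral_div_sq_le_integral_div ha4 hab4
  have middle_nonneg := mul_nonneg ha.le (hθ.integral_div_pow_nonneg ha4.le hab4 2)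
  have tail_le := mul_le_mul_of_nonneg_right hab (hθ.integral_div_pow_nonneg hb4.le hbR4 2)
  rw [thetaTilde, thetaTilde, ← head, ← tail, mul_add]
  linarith

theorem thetaTilde_two_mul_le (hθ : IsDiniModulus θ) (hr : 0 < r) (hrR : r ≤ R / 8) :
    thetaTilde θ R (2 * r) ≤ 34 * thetaTilde θ R r := by
  have h4 : 0 < 4 * r := by positivity
  have h8 : 0 < 8 * r := by positivity
  have h16 : 0 < 16 * r := by positivity
  have h16R : 16 * r ≤ 2 * R := by linarith
  have hR : 0 < 2 * R := h16.trans_le h16R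
  have head := integral_add_adjacent_intervals (hθ.intervalIntegrable_div le_rfl h4.le)
    (hθ.intervalIntegrable_div h4.le h8.le)
  have head_nonneg := hθ.integral_div_nonneg le_rfl h4.le
  have tail₄ := integral_add_adjacent_intervals (hθ.intervalIntegrable_div_pow h4 h8 2)
    (hθ.intervalIntegrable_div_pow h8 hR 2)
  have tail₈ := integral_add_adjacent_intervals (hθ.intervalIntegrable_div_pow h8 h16 2)
    (hθ.intervalIntegrable_div_pow h16 hR 2)
  have nonneg₄ := mul_nonneg hr.le
    (hθ.integral_div_pow_nonneg h4.le (by linarith : 4 * r ≤ 8 * r) 2)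
  have nonneg₁₆ := mul_nonneg hr.le (hθ.integral_div_pow_nonneg h16.le h16R 2)
  have le₄ := hθ.integral_div_le_mul_integral_div_sq h4 (by linarith : 4 * r ≤ 8 * r)
  have le₈ := hθ.integral_div_le_mul_integral_div_sq h8 (by linarith : 8 * r ≤ 16 * r)
  have value_le := hθ.le_two_mul_integral_div h8
  have value_nonneg := hθ.nonneg _ h4.le
  rw [show 2 * (8 * r) = 16 * r by ring] at value_le
  rw [thetaTilde, thetaTilde, show 4 * (2 * r) = 8 * r by ring, ← head, ← tail₄, ← tail₈]
  linarith

end IsDiniModulus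

end DiniModulus

section Integrals

variable {α : Type*} [MeasurableSpace α] {μ : Measure α} {s t : Set α}

theorem norm_setIntegral_sub_setIntegral_le_of_symmDiff {G : Type*} [NormedAddCommGroup G]
    [NormedSpace ℝ G] {f : α → G} {c : ℝ} (hs : MeasurableSet s) (ht : MeasurableSet t)
    (hfs : IntegrableOn f s μ) (hft : IntegrableOn f t μ) (hst : μ (s ∆ t) < ⊤)
    (hc : ∀ x ∈ s ∆ t, ‖f x‖ ≤ c) :
    ‖∫ x in s, f x ∂μ - ∫ x in t, f x ∂μ‖ ≤ c * μ.real (s ∆ t) := by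
  have hst_left : μ (s \ t) < ⊤ := (measure_mono subset_union_left).trans_lt hst
  have hst_right : μ (t \ s) < ⊤ := (measure_mono subset_union_right).trans_lt hst
  have split : ∫ x in s, f x ∂μ - ∫ x in t, f x ∂μ =
      ∫ x in s \ t, f x ∂μ - ∫ x in t \ s, f x ∂μ := by
    rw [← integral_inter_add_sdiff ht hfs, ← integral_inter_add_sdiff hs hft, inter_comm t s,
      add_sub_add_left_eq_sub]
  calc ‖∫ x in s, f x ∂μ - ∫ x in t, f x ∂μ‖
      ≤ ‖∫ x in s \ t, f x ∂μ‖ + ‖∫ x in t \ s, f x ∂μ‖ := by rw [split]; exact norm_sub_le _ _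
    _ ≤ c * μ.real (s \ t) + c * μ.real (t \ s) := add_le_add
        (norm_setIntegral_le_of_norm_le_const hst_left fun x hx => hc x (.inl hx))
        (norm_setIntegral_le_of_norm_le_const hst_right fun x hx => hc x (.inr hx))
    _ = c * μ.real (s ∆ t) := by
        rw [← mul_add, Set.symmDiff_def,
          measureReal_union disjoint_sdiff_sdiff (ht.diff hs) hst_left.ne hst_right.ne]

theorem abs_setIntegral_sq_sub_setIntegral_sq_le {f g : α → ℝ} {e M : ℝ} (hs : MeasurableSet s)
    (ht : MeasurableSet t) (hst : μ (s ∪ t) < ⊤) (hf : AEStronglyMeasurable f (μ.restrict s))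
    (hg : AEStronglyMeasurable g (μ.restrict (s ∪ t))) (hfg : ∀ x ∈ s, |f x - g x| ≤ e)
    (hgM : ∀ x ∈ s ∪ t, |g x| ≤ M) :
    |∫ x in s, f x ^ 2 ∂μ - ∫ x in t, g x ^ 2 ∂μ| ≤
      e * (e + 2 * M) * μ.real s + M ^ 2 * μ.real (s ∆ t) := by
  have hμs : μ s < ⊤ := (measure_mono subset_union_left).trans_lt hst
  have sq_le : ∀ x ∈ s ∪ t, ‖g x ^ 2‖ ≤ M ^ 2 := fun x hx => by
    rw [norm_pow]
    exact pow_le_pow_left₀ (norm_nonneg _) (hgM x hx) 2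
  have diff_le : ∀ x ∈ s, ‖f x ^ 2 - g x ^ 2‖ ≤ e * (e + 2 * M) := fun x hx => by
    have he : 0 ≤ e := (abs_nonneg _).trans (hfg x hx)
    have sum_le : |f x + g x| ≤ e + 2 * M := calc
      |f x + g x| = |(f x - g x) + 2 * g x| := by ring_nf
      _ ≤ |f x - g x| + |2 * g x| := abs_add_le _ _
      _ ≤ e + 2 * M := by
          rw [abs_mul, abs_two]
          linarith [hfg x hx, hgM x (.inl hx)]
    rw [Real.norm_eq_abs, sq_sub_sq, abs_mul, mul_comm]
    exact mul_le_mul (hfg x hx) sum_le (abs_nonneg _) he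
  have hgint : IntegrableOn (fun x => g x ^ 2) (s ∪ t) μ :=
    .of_bound hst (hg.pow 2) (M ^ 2) (ae_restrict_of_forall_mem (hs.union ht) sq_le)
  have hgs := hgint.mono_set (subset_union_left (s := s) (t := t))
  have hgt := hgint.mono_set (subset_union_right (s := s) (t := t))
  have hdint : IntegrableOn (fun x => f x ^ 2 - g x ^ 2) s μ :=
    .of_bound hμs ((hf.pow 2).sub hgs.aestronglyMeasurable) _ (ae_restrict_of_forall_mem hs diff_le)
  have hfs : IntegrableOn (fun x => f x ^ 2) s μ := by simpa [Pi.add_def] using hdint.add hgs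
  have integrand_part : |∫ x in s, f x ^ 2 ∂μ - ∫ x in s, g x ^ 2 ∂μ| ≤
      e * (e + 2 * M) * μ.real s := by
    rw [← MeasureTheory.integral_sub hfs hgs]
    exact norm_setIntegral_le_of_norm_le_const hμs diff_le
  have domain_part : |∫ x in s, g x ^ 2 ∂μ - ∫ x in t, g x ^ 2 ∂μ| ≤ M ^ 2 * μ.real (s ∆ t) :=
    norm_setIntegral_sub_setIntegral_le_of_symmDiff hs ht hgs hgt
      ((measure_mono symmDiff_subset_union).trans_lt hst)
      fun x hx => sq_le x (symmDiff_subset_union hx)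
  exact (abs_sub_le _ _ _).trans (add_le_add integrand_part domain_part)

theorem setIntegral_pos_of_continuous_of_isOpen [TopologicalSpace α] [OpensMeasurableSpace α]
    [μ.IsOpenPosMeasure] {f : α → ℝ} (hf : Continuous f) (hs : IsOpen s)
    (hfs : IntegrableOn f s μ) (hf0 : ∀ x ∈ s, 0 ≤ f x) (hne : ∃ x ∈ s, f x ≠ 0) :
    0 < ∫ x in s, f x ∂μ := by
  rw [setIntegral_pos_iff_support_of_nonneg_ae
    (ae_restrict_of_forall_mem hs.measurableSet hf0) hfs]
  obtain ⟨x, hxs, hfx⟩ := hne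
  exact (hf.isOpen_support.inter hs).measure_pos μ ⟨x, hfx, hxs⟩

theorem volume_real_ball_inter_slab_le {ι : Type*} [Fintype ι] (i : ι) {τ : ℝ} (hτ : 0 ≤ τ) :
    volume.real (ball (0 : EuclideanSpace ℝ ι) 1 ∩ {x | |x i| ≤ τ}) ≤
      2 ^ Fintype.card ι * τ := by
  classical
  let a : ι → ℝ := Function.update 1 i τ
  have ha : 0 ≤ a := fun j => by
    rcases eq_or_ne j i with rfl | hj <;> simp [a, *]
  have in_box : ball (0 : EuclideanSpace ℝ ι) 1 ∩ {x | |x i| ≤ τ} ⊆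
      (MeasurableEquiv.toLp 2 (ι → ℝ)).symm ⁻¹' Icc (-a) a := by
    rintro x ⟨hx, hxi⟩
    have coord_le : ∀ j, |x j| ≤ a j := fun j => by
      rcases eq_or_ne j i with rfl | hj
      · simpa [a] using hxi
      · simpa [a, hj] using (PiLp.norm_apply_le x j).trans (mem_ball_zero_iff.1 hx).le
    exact ⟨fun j => (abs_le.1 (coord_le j)).1, fun j => (abs_le.1 (coord_le j)).2⟩
  have box_volume : volume ((MeasurableEquiv.toLp 2 (ι → ℝ)).symm ⁻¹' Icc (-a) a) =
      ENNReal.ofReal (2 ^ Fintype.card ι * τ) := by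
    rw [(EuclideanSpace.volume_preserving_symm_measurableEquiv_toLp ι).measure_preimage_equiv,
      Real.volume_Icc_pi, ← ENNReal.ofReal_prod_of_nonneg fun j _ => by simpa using ha j]
    simp [← two_mul, Finset.prod_mul_distrib, a, Finset.prod_update_of_mem]
  refine ENNReal.toReal_le_of_le_ofReal (by positivity) ?_
  rw [← box_volume]
  exact measure_mono in_box

end Integrals

theorem abs_div_sqrt_sub_div_sqrt_le {a b v p : ℝ} (ha : 0 < a) (hb : a / 2 ≤ b) :
    |v / √b - p / √a| ≤ (|v - p| + |p| * |b - a| / a) / √(a / 2) := by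
  have hb0 : 0 < b := (half_pos ha).trans_le hb
  have hsa : 0 < √a := Real.sqrt_pos.2 ha
  have hsb : 0 < √b := Real.sqrt_pos.2 hb0
  have sqrt_sub_le : |√b - √a| ≤ |b - a| / √a := by
    rw [le_div_iff₀ hsa]
    calc |√b - √a| * √a ≤ |√b - √a| * (√b + √a) := by gcongr; linarith
      _ = |b - a| := by
          rw [← abs_of_pos (add_pos hsb hsa), ← abs_mul, mul_comm, ← sq_sub_sq,
            Real.sq_sqrt hb0.le, Real.sq_sqrt ha.le]
  have num_le : |p * (√b - √a) / √a| ≤ |p| * |b - a| / a := by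
    rw [abs_div, abs_mul, abs_of_pos hsa]
    calc |p| * |√b - √a| / √a ≤ |p| * (|b - a| / √a) / √a := by gcongr
      _ = |p| * |b - a| / a := by rw [mul_div_assoc', div_div, Real.mul_self_sqrt ha.le]
  calc |v / √b - p / √a| = |(v - p) - p * (√b - √a) / √a| / √b := by
        rw [← abs_of_pos hsb, ← abs_div, abs_of_pos hsb]
        congr 1
        field_simp
        ring
    _ ≤ (|v - p| + |p| * |b - a| / a) / √b := by
        gcongr
        exact (abs_sub _ _).trans (by gcongr)
    _ ≤ (|v - p| + |p| * |b - a| / a) / √(a / 2) := by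
        have := Real.sqrt_pos.2 (half_pos ha)
        gcongr

theorem norm_sub_le_of_norm_fderiv_le_of_monotoneOn {F G : Type*} [NormedAddCommGroup F]
    [NormedSpace ℝ F] [NormedAddCommGroup G] [NormedSpace ℝ G] {f : F → G} {θ : ℝ → ℝ}
    (hf : Differentiable ℝ f) (hθ : MonotoneOn θ (Ici 0)) (hfθ : ∀ x, ‖fderiv ℝ f x‖ ≤ θ ‖x‖)
    (x : F) : ‖f x - f 0‖ ≤ θ ‖x‖ * ‖x‖ := by
  have fderiv_le : ∀ y ∈ closedBall (0 : F) ‖x‖, ‖fderiv ℝ f y‖ ≤ θ ‖x‖ := fun y hy =>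
    (hfθ y).trans (hθ (norm_nonneg y) (norm_nonneg x) (mem_closedBall_zero_iff.1 hy))
  simpa using (convex_closedBall (0 : F) ‖x‖).norm_image_sub_le_of_norm_fderiv_le
    (fun y _ => hf y) fderiv_le (mem_closedBall_self (norm_nonneg x)) (by simp)

section HomogeneousRescaling

variable {V : Type*} [NormedAddCommGroup V] [NormedSpace ℝ V] {D : Set V} {u P : V → ℝ} {N : ℕ}

theorem norm_smul_lt_of_mem_ball {r : ℝ} {Z : V} (hr : 0 < r) (hZ : Z ∈ ball 0 1) :
    ‖r • Z‖ < r := by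
  rw [norm_smul, Real.norm_of_nonneg hr.le]
  exact mul_lt_of_lt_one_right hr (mem_ball_zero_iff.1 hZ)

/-- The rescaling `Z ↦ u(rZ) / r ^ N`, which fixes functions homogeneous of degree `N`. The
`L²`-normalization of `u` at scale `r` is insensitive to the factor `r ^ N`. -/
def homRescale (N : ℕ) (u : V → ℝ) (r : ℝ) (Z : V) : ℝ := u (r • Z) / r ^ N

theorem exists_eventually_abs_homRescale_sub_le {θ : ℝ → ℝ} {R : ℝ} (hθ : IsDiniModulus θ)
    (hR : 0 < R) (hP : ∀ l : ℝ, 0 < l → ∀ x, P (l • x) = l ^ N * P x)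
    (huP : (fun X => u X - P X) =O[𝓝[D] 0] fun X => ‖X‖ ^ N * thetaTilde θ R (2 * ‖X‖)) :
    ∃ K, 0 < K ∧ ∀ᶠ r in 𝓝[>] 0, ∀ Z ∈ ball 0 1, r • Z ∈ D →
      |homRescale N u r Z - P Z| ≤ K * thetaTilde θ R r := by
  obtain ⟨C, hC, hCuP⟩ := huP.exists_pos
  obtain ⟨ρ, hρ, hρuP⟩ := Metric.mem_nhdsWithin_iff.1 hCuP.bound
  refine ⟨34 * C, by positivity, ?_⟩
  filter_upwards [Ioo_mem_nhdsGT (lt_min hρ (by positivity : 0 < R / 8))] with r ⟨hr, hrlt⟩ Z hZ hZD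
  obtain ⟨hrρ, hrR⟩ := lt_min_iff.1 hrlt
  have hrN : 0 < r ^ N := pow_pos hr N
  have norm_lt := norm_smul_lt_of_mem_ball hr hZ
  have hmem₁ : 2 * ‖r • Z‖ ∈ Icc 0 (R / 2) := ⟨by positivity, by linarith⟩
  have hmem₂ : 2 * r ∈ Icc 0 (R / 2) := ⟨by positivity, by linarith⟩
  have modulus_le : thetaTilde θ R (2 * ‖r • Z‖) ≤ 34 * thetaTilde θ R r :=
    (hθ.monotoneOn_thetaTilde hmem₁ hmem₂ (by linarith)).trans (hθ.thetaTilde_two_mul_le hr hrR.le)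
  have expansion : |u (r • Z) - P (r • Z)| ≤
      C * (‖r • Z‖ ^ N * thetaTilde θ R (2 * ‖r • Z‖)) := by
    have bound := hρuP ⟨mem_ball_zero_iff.2 (norm_lt.trans hrρ), hZD⟩
    rwa [mem_ofPred_eq, Real.norm_eq_abs, Real.norm_of_nonneg
      (mul_nonneg (by positivity) (hθ.thetaTilde_nonneg hmem₁.1 hmem₁.2))] at bound
  calc |homRescale N u r Z - P Z| = |u (r • Z) - P (r • Z)| / r ^ N := by
        rw [homRescale, hP r hr, ← abs_of_pos hrN, ← abs_div, abs_of_pos hrN]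
        congr 1
        field_simp
    _ ≤ C * (r ^ N * (34 * thetaTilde θ R r)) / r ^ N := by
        have := hθ.thetaTilde_nonneg hmem₁.1 hmem₁.2
        gcongr
        exact expansion.trans (by gcongr)
    _ = 34 * C * thetaTilde θ R r := by field_simp

theorem aestronglyMeasurable_homRescale [MeasurableSpace V] [BorelSpace V]
    [FiniteDimensional ℝ V] {μ : Measure V} [μ.IsAddHaarMeasure] {r : ℝ} {s t : Set V}
    (hr : r ≠ 0) (hu : AEStronglyMeasurable u (μ.restrict t)) (hst : MapsTo (r • ·) s t) :
    AEStronglyMeasurable (homRescale N u r) (μ.restrict s) := by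
  have comp := hu.comp_quasiMeasurePreserving
    ((Measure.quasiMeasurePreserving_smul μ hr).restrict hst)
  exact (comp.mul_const (r ^ N)⁻¹).congr (.of_forall fun _ => (div_eq_mul_inv _ _).symm)

end HomogeneousRescaling

section GraphDomain

variable {n : ℕ} {φ : Eb n → ℝ} {θ : ℝ → ℝ} {R r : ℝ} {u P : E n → ℝ} {N : ℕ}

theorem continuous_initC : Continuous (initC : E n → Eb n) := by
  unfold initC
  fun_prop

theorem continuous_lastC : Continuous (lastC : E n → ℝ) := by
  unfold lastC
  fun_prop

theorem norm_initC_le (X : E n) : ‖initC X‖ ≤ ‖X‖ := by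
  rw [EuclideanSpace.norm_eq, EuclideanSpace.norm_eq, Fin.sum_univ_castSucc (n := n)]
  exact Real.sqrt_le_sqrt (le_add_of_nonneg_right (sq_nonneg _))

/-- The set `B₁(0) ∩ (D/r)` on which the rescalings of a function on `D = Dom φ` live. -/
def dilatedDom (φ : Eb n → ℝ) (r : ℝ) : Set (E n) := ball 0 1 ∩ {Z | r • Z ∈ Dom φ}

/-- The half ball `B₁(0) ∩ {Y_d > 0}`, the limit of `dilatedDom φ r` as `r → 0`. -/
def unitHalfBall (n : ℕ) : Set (E n) := ball 0 1 ∩ {Y | 0 < lastC Y}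

theorem measurableSet_Dom (hφ : Measurable φ) : MeasurableSet (Dom φ) :=
  measurableSet_lt (hφ.comp continuous_initC.measurable) continuous_lastC.measurable

theorem measurableSet_dilatedDom (hφ : Measurable φ) (r : ℝ) :
    MeasurableSet (dilatedDom φ r) :=
  measurableSet_ball.inter (measurableSet_Dom hφ |>.preimage (measurable_const_smul r))

theorem isOpen_unitHalfBall : IsOpen (unitHalfBall n) :=
  isOpen_ball.inter (isOpen_lt continuous_const continuous_lastC)

theorem dilatedDom_symmDiff_unitHalfBall_subset (hr : 0 < r) (hθ : MonotoneOn θ (Ici 0))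
    (hθr : 0 ≤ θ r) (hφ : ∀ x, ‖x‖ < r → |φ x| ≤ θ ‖x‖ * ‖x‖) :
    dilatedDom φ r ∆ unitHalfBall n ⊆ ball 0 1 ∩ {Y | |lastC Y| ≤ θ r} := by
  have slab : ∀ Y ∈ ball (0 : E n) 1, ¬(r • Y ∈ Dom φ ↔ 0 < lastC Y) → |lastC Y| ≤ θ r := by
    intro Y hY hne
    have norm_lt : ‖initC (r • Y)‖ < r :=
      (norm_initC_le _).trans_lt (norm_smul_lt_of_mem_ball hr hY)
    have graph_le : |φ (initC (r • Y))| ≤ r * θ r := calc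
      |φ (initC (r • Y))| ≤ θ ‖initC (r • Y)‖ * ‖initC (r • Y)‖ := hφ _ norm_lt
      _ ≤ θ r * r :=
          mul_le_mul (hθ (norm_nonneg _) hr.le norm_lt.le) norm_lt.le (norm_nonneg _) hθr
      _ = r * θ r := mul_comm _ _
    have mem_iff : r • Y ∈ Dom φ ↔ φ (initC (r • Y)) < r * lastC Y := Iff.rfl
    refine le_of_not_gt fun hlt => hne ?_
    rw [mem_iff]
    obtain ⟨graph_ge, graph_le⟩ := abs_le.1 graph_le
    rcases lt_abs.1 hlt with habove | hbelow
    · exact iff_of_true (by nlinarith) (hθr.trans_lt habove)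
    · exact iff_of_false (by nlinarith) (by linarith)
  rintro Y (⟨⟨hY, hYD⟩, hYH⟩ | ⟨⟨hY, hYH⟩, hYD⟩)
  · exact ⟨hY, slab Y hY fun hiff => hYH ⟨hY, hiff.1 hYD⟩⟩
  · exact ⟨hY, slab Y hY fun hiff => hYD ⟨hY, hiff.2 hYH⟩⟩

theorem volume_real_dilatedDom_symmDiff_unitHalfBall_le (hr : 0 < r) (hθ : MonotoneOn θ (Ici 0))
    (hθr : 0 ≤ θ r) (hφ : ∀ x, ‖x‖ < r → |φ x| ≤ θ ‖x‖ * ‖x‖) :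
    volume.real (dilatedDom φ r ∆ unitHalfBall n) ≤ 2 ^ (n + 1) * θ r := by
  have slab_le := volume_real_ball_inter_slab_le (Fin.last n) hθr
  rw [Fintype.card_fin] at slab_le
  exact (measureReal_mono (dilatedDom_symmDiff_unitHalfBall_subset hr hθ hθr hφ)
    ((measure_mono inter_subset_left).trans_lt measure_ball_lt_top).ne).trans slab_le

open scoped Pointwise in
theorem rescaledU_eq_homRescale_div_sqrt (φ : Eb n → ℝ) (u : E n → ℝ) (N : ℕ) (hr : 0 < r)
    (Z : E n) : rescaledU φ u r Z =
      homRescale N u r Z / √(∫ Y in dilatedDom φ r, homRescale N u r Y ^ 2) := by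
  have smul_dilatedDom : r • dilatedDom φ r = ball 0 r ∩ Dom φ := by
    ext X
    rw [mem_smul_set_iff_inv_smul_mem₀ hr.ne', dilatedDom, mem_inter_iff, mem_inter_iff,
      mem_ofPred_eq, smul_inv_smul₀ hr.ne', mem_ball_zero_iff, mem_ball_zero_iff, norm_smul,
      norm_inv, Real.norm_of_nonneg hr.le, inv_mul_lt_iff₀ hr, mul_one]
  have change_var : ∫ Y in dilatedDom φ r, u (r • Y) ^ 2 =
      (r ^ (n + 1))⁻¹ * ∫ X in ball 0 r ∩ Dom φ, u X ^ 2 := by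
    rw [Measure.setIntegral_comp_smul_of_pos volume (fun X => u X ^ 2) _ hr, smul_dilatedDom,
      finrank_euclideanSpace_fin, smul_eq_mul]
  have hrN : 0 < r ^ N := pow_pos hr N
  simp only [rescaledU, homRescale, div_pow, MeasureTheory.integral_div]
  rw [← change_var, Real.sqrt_div' _ (sq_nonneg _), Real.sqrt_sq hrN.le,
    div_div_div_cancel_right₀ hrN.ne']

theorem isBigO_setIntegral_homRescale_sq_sub {K M : ℝ} (hθ : IsDiniModulus θ) (hR : 0 < R)
    (hφm : Measurable φ) (hφ : ∀ᶠ x in 𝓝 0, |φ x| ≤ θ ‖x‖ * ‖x‖)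
    (hum : StronglyMeasurableAtFilter u (𝓝[Dom φ] 0)) (hPc : Continuous P)
    (hPM : ∀ Z ∈ ball 0 1, |P Z| ≤ M) (hK : 0 ≤ K)
    (huP : ∀ᶠ r in 𝓝[>] 0, ∀ Z ∈ ball 0 1, r • Z ∈ Dom φ →
      |homRescale N u r Z - P Z| ≤ K * thetaTilde θ R r) :
    (fun r => (∫ Y in dilatedDom φ r, homRescale N u r Y ^ 2) - ∫ Y in unitHalfBall n, P Y ^ 2)
      =O[𝓝[>] 0] thetaTilde θ R := by
  obtain ⟨t, ht, hut⟩ := hum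
  obtain ⟨ρ, hρ, hρt⟩ := Metric.mem_nhdsWithin_iff.1 ht
  obtain ⟨δ, hδ, hδφ⟩ := Metric.eventually_nhds_iff_ball.1 hφ
  have hM : 0 ≤ M := (abs_nonneg _).trans (hPM 0 (mem_ball_self one_pos))
  have modulus_le_one := (hθ.tendsto_thetaTilde hR).eventually_le_const one_pos
  refine .of_bound
    (K * (K + 2 * M) * volume.real (ball (0 : E n) 1) + M ^ 2 * 2 ^ (n + 1)) ?_
  filter_upwards [huP, modulus_le_one, Ioo_mem_nhdsGT hρ, Ioo_mem_nhdsGT hδ,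
    Ioo_mem_nhdsGT (half_pos hR)] with r hrP hr1 ⟨hr, hrρ⟩ hrδ hrR
  have subset_ball : dilatedDom φ r ∪ unitHalfBall n ⊆ ball 0 1 :=
    union_subset inter_subset_left inter_subset_left
  have mapsTo : MapsTo (r • ·) (dilatedDom φ r) t := fun Z hZ =>
    hρt ⟨mem_ball_zero_iff.2 ((norm_smul_lt_of_mem_ball hr hZ.1).trans hrρ), hZ.2⟩
  have compare := abs_setIntegral_sq_sub_setIntegral_sq_le (measurableSet_dilatedDom hφm r)
    isOpen_unitHalfBall.measurableSet ((measure_mono subset_ball).trans_lt measure_ball_lt_top)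
    (aestronglyMeasurable_homRescale hr.ne' hut mapsTo) hPc.aestronglyMeasurable
    (fun Z hZ => hrP Z hZ.1 hZ.2) (fun Z hZ => hPM Z (subset_ball hZ))
  have domain_le : volume.real (dilatedDom φ r) ≤ volume.real (ball (0 : E n) 1) :=
    measureReal_mono inter_subset_left measure_ball_lt_top.ne
  have symmDiff_le : volume.real (dilatedDom φ r ∆ unitHalfBall n) ≤
      2 ^ (n + 1) * thetaTilde θ R r :=
    (volume_real_dilatedDom_symmDiff_unitHalfBall_le hr hθ.monotoneOn (hθ.nonneg r hr.le)
      fun x hx => hδφ x (mem_ball_zero_iff.2 (hx.trans hrδ.2))).trans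
      (by gcongr; exact hθ.le_thetaTilde hr.le hrR.2.le)
  have modulus_nonneg := hθ.thetaTilde_nonneg hr.le hrR.2.le
  rw [Real.norm_eq_abs, Real.norm_of_nonneg modulus_nonneg]
  calc _ ≤ _ := compare
    _ ≤ K * thetaTilde θ R r * (K * 1 + 2 * M) * volume.real (ball (0 : E n) 1) +
        M ^ 2 * (2 ^ (n + 1) * thetaTilde θ R r) := by gcongr
    _ = _ := by ring

end GraphDomain

theorem setIntegral_unitHalfBall_sq_pos {n N : ℕ} {P : E n → ℝ} (hPc : Continuous P)
    (hP : ∀ l : ℝ, 0 < l → ∀ x, P (l • x) = l ^ N * P x) (hPne : ∃ Z, 0 < lastC Z ∧ P Z ≠ 0) :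
    0 < ∫ Y in unitHalfBall n, P Y ^ 2 := by
  obtain ⟨Z, hZ, hPZ⟩ := hPne
  have hscale : 0 < (‖Z‖ + 1)⁻¹ := by positivity
  have scaled_mem : (‖Z‖ + 1)⁻¹ • Z ∈ unitHalfBall n := by
    refine ⟨?_, mul_pos hscale hZ⟩
    rw [mem_ball_zero_iff, norm_smul, Real.norm_of_nonneg hscale.le,
      inv_mul_lt_one₀ (by positivity)]
    exact lt_add_one _
  have scaled_ne : P ((‖Z‖ + 1)⁻¹ • Z) ≠ 0 := by
    rw [hP _ hscale]
    exact mul_ne_zero (pow_pos hscale N).ne' hPZ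
  have integrable : IntegrableOn (fun Y => P Y ^ 2) (unitHalfBall n) :=
    ((hPc.pow 2).continuousOn.integrableOn_compact (isCompact_closedBall 0 1)).mono_set
      (inter_subset_left.trans ball_subset_closedBall)
  exact setIntegral_pos_of_continuous_of_isOpen (hPc.pow 2) isOpen_unitHalfBall integrable
    (fun Y _ => sq_nonneg _) ⟨_, scaled_mem, pow_ne_zero 2 scaled_ne⟩

theorem IsHomHarmPoly.continuous {d N : ℕ} {P : EuclideanSpace ℝ (Fin d) → ℝ}
    (hP : IsHomHarmPoly N P) : Continuous P := by
  obtain ⟨⟨p, hp⟩, -⟩ := hP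
  rw [funext hp]
  exact p.continuous_eval.comp (by fun_prop)

theorem IsHomHarmPoly.exists_lastC_pos_and_ne_zero {n N : ℕ} {P : E n → ℝ}
    (hP : IsHomHarmPoly N P) (hPnz : P ≠ 0) : ∃ Z, 0 < lastC Z ∧ P Z ≠ 0 := by
  obtain ⟨⟨p, hp⟩, -⟩ := hP
  by_contra! vanish
  -- The half space is a product of infinite sets, so `p` is determined by its values there.
  have p_eq_zero : p = 0 := by
    refine MvPolynomial.funext_set (fun i => if i = Fin.last n then Ioi 0 else univ)
      (fun i => ?_) fun x hx => ?_
    · split_ifs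
      exacts [Ioi_infinite 0, infinite_univ]
    · have last_pos : 0 < x (Fin.last n) := by simpa using hx (Fin.last n) (mem_univ _)
      have := vanish (WithLp.toLp 2 x) last_pos
      rw [hp] at this
      simpa using this
  exact hPnz (funext fun x => by simp [hp, p_eq_zero])

theorem tangent_function_convergence_rate_general {n N : ℕ} {θ : ℝ → ℝ} {φ : Eb n → ℝ}
    {u P : E n → ℝ} {R : ℝ} (hθ : IsDiniModulus θ) (hφm : Measurable φ)
    (hφ : ∀ᶠ x in 𝓝 0, |φ x| ≤ θ ‖x‖ * ‖x‖)
    (hum : StronglyMeasurableAtFilter u (𝓝[Dom φ] 0)) (hPc : Continuous P)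
    (hP : ∀ l : ℝ, 0 < l → ∀ x, P (l • x) = l ^ N * P x) (hPne : ∃ Z, 0 < lastC Z ∧ P Z ≠ 0)
    (hR : 0 < R)
    (huP : (fun X => u X - P X) =O[𝓝[Dom φ] 0] fun X => ‖X‖ ^ N * thetaTilde θ R (2 * ‖X‖)) :
    ∃ r₁ C' : ℝ, 0 < r₁ ∧ r₁ < R ∧ 0 < C' ∧
      ∀ r : ℝ, 0 < r → r < r₁ → ∀ Z ∈ ball (0 : E n) 1, r • Z ∈ Dom φ →
        |rescaledU φ u r Z - (√(∫ Y in unitHalfBall n, P Y ^ 2))⁻¹ * P Z| ≤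
          C' * thetaTilde θ R r := by
  obtain ⟨M, hM⟩ :=
    (isCompact_closedBall (0 : E n) 1).exists_bound_of_continuousOn hPc.continuousOn
  have hPM : ∀ Z ∈ ball 0 1, |P Z| ≤ M := fun Z hZ => hM Z (ball_subset_closedBall hZ)
  have hM0 : 0 ≤ M := (abs_nonneg _).trans (hPM 0 (mem_ball_self one_pos))
  obtain ⟨K, hK, pointwise⟩ := exists_eventually_abs_homRescale_sub_le hθ hR hP huP
  have isBigO := isBigO_setIntegral_homRescale_sq_sub hθ hR hφm hφ hum hPc hPM hK.le pointwise
  obtain ⟨L, hL, hLbound⟩ := isBigO.exists_pos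
  set A := ∫ Y in unitHalfBall n, P Y ^ 2
  have hA : 0 < A := setIntegral_unitHalfBall_sq_pos hPc hP hPne
  have mass_lower : ∀ᶠ r in 𝓝[>] 0,
      -(A / 2) < (∫ Y in dilatedDom φ r, homRescale N u r Y ^ 2) - A :=
    (isBigO.trans_tendsto (hθ.tendsto_thetaTilde hR)).eventually_const_lt (by linarith)
  obtain ⟨r₁, ⟨hr₁, hr₁R⟩, hsub⟩ := (mem_nhdsGT_iff_exists_mem_Ioc_Ioo_subset (half_pos hR)).1
    (pointwise.and (hLbound.bound.and mass_lower))
  refine ⟨r₁, (K + M * L / A) / √(A / 2), hr₁, by linarith, by positivity,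
    fun r hr hrr₁ Z hZ hZD => ?_⟩
  obtain ⟨hv, hb, hbA⟩ := hsub ⟨hr, hrr₁⟩
  have modulus_nonneg := hθ.thetaTilde_nonneg hr.le (hrr₁.le.trans hr₁R)
  rw [Real.norm_eq_abs, Real.norm_of_nonneg modulus_nonneg] at hb
  rw [rescaledU_eq_homRescale_div_sqrt φ u N hr, inv_mul_eq_div]
  calc _ ≤ _ := abs_div_sqrt_sub_div_sqrt_le hA (by linarith)
    _ ≤ (K * thetaTilde θ R r + M * (L * thetaTilde θ R r) / A) / √(A / 2) := by
        gcongr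
        exacts [hv Z hZ hZD, hPM Z hZ]
    _ = (K + M * L / A) / √(A / 2) * thetaTilde θ R r := by ring

/-- convergence rate to the unique tangent function. If `u` has the
expansion `u = P + O(|X|^{N₀}θ̃(2|X|))` at `0 ∈ ∂D`, then with
`c = (∫_{B₁∩ℝ^d_+} P²)^{−1/2}` we have `|T_r u(Z) − cP(Z)| ≤ C′θ̃(r)` for all small
`r > 0` and all `Z ∈ B₁(0) ∩ (D/r)`; in particular `cP` is the unique tangent function
of `u` at `0`. -/
theorem tangent_function_convergence_rate
    {n : ℕ} (hn : 1 ≤ n)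
    (θ : ℝ → ℝ) (hθnn : ∀ r : ℝ, 0 ≤ r → 0 ≤ θ r)
    (hθmono : MonotoneOn θ (Set.Ici (0:ℝ)))
    (Cθ : ℝ) (hθdbl : ∀ r : ℝ, 0 < r → θ (2 * r) ≤ Cθ * θ r)
    (hθdini : IntegrableOn (fun s => θ s / s) (Set.Ioc (0:ℝ) 1) volume)
    (φ : Eb n → ℝ) (hφ : ContDiff ℝ 1 φ) (hφ0 : φ 0 = 0) (hφ'0 : fderiv ℝ φ 0 = 0)
    (hφmod : ∀ x y : Eb n, ‖fderiv ℝ φ x - fderiv ℝ φ y‖ ≤ θ ‖x - y‖)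
    (R₀ : ℝ) (hR₀ : 0 < R₀)
    (u : E n → ℝ)
    (hu : IsHarmonicOn u (Dom φ ∩ ball 0 (5 * R₀)))
    (huc : ContinuousOn u (closure (Dom φ ∩ ball 0 (5 * R₀))))
    (hub : ∀ X ∈ frontier (Dom φ) ∩ ball (0 : E n) (5 * R₀), u X = 0)
    (hunz : ∃ X ∈ Dom φ ∩ ball (0 : E n) (5 * R₀), u X ≠ 0)
    (N₀ : ℕ) (hN₀ : 1 ≤ N₀)
    (P : E n → ℝ) (hP : IsHomHarmPoly N₀ P) (hPnz : P ≠ 0)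
    (R C : ℝ) (hR : 0 < R) (hC : 0 < C)
    (hexp : ∀ X ∈ Dom φ ∩ ball (0 : E n) R,
      |u X - P X| ≤ C * ‖X‖ ^ N₀ * thetaTilde θ R (2 * ‖X‖)) :
    ∃ (r₁ C' : ℝ), 0 < r₁ ∧ r₁ < R ∧ 0 < C' ∧
      ∀ r : ℝ, 0 < r → r < r₁ →
        ∀ Z ∈ ball (0 : E n) 1, r • Z ∈ Dom φ →
          |rescaledU φ u r Z -
            (Real.sqrt (∫ Y in ball (0 : E n) 1 ∩ {Y : E n | 0 < lastC Y}, (P Y) ^ 2))⁻¹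
              * P Z|
            ≤ C' * thetaTilde θ R r := by
  have hφθ : ∀ x, |φ x| ≤ θ ‖x‖ * ‖x‖ := fun x => by
    simpa [hφ0] using norm_sub_le_of_norm_fderiv_le_of_monotoneOn
      (hφ.differentiable one_ne_zero) hθmono (fun x => by simpa [hφ'0] using hφmod x 0) x
  have hum : StronglyMeasurableAtFilter u (𝓝[Dom φ] 0) :=
    ⟨Dom φ ∩ ball 0 (5 * R₀), inter_mem_nhdsWithin _ (ball_mem_nhds 0 (by positivity)),
      (huc.mono subset_closure).aestronglyMeasurable
        ((measurableSet_Dom hφ.continuous.measurable).inter measurableSet_ball)⟩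
  have huP : (fun X => u X - P X) =O[𝓝[Dom φ] 0]
      fun X => ‖X‖ ^ N₀ * thetaTilde θ R (2 * ‖X‖) := by
    refine .of_bound C ?_
    filter_upwards [inter_mem_nhdsWithin _ (ball_mem_nhds 0 hR)] with X hX
    refine (hexp X hX).trans ?_
    rw [mul_assoc]
    exact mul_le_mul_of_nonneg_left (le_abs_self _) hC.le
  exact tangent_function_convergence_rate_general ⟨hθnn, hθmono, hθdini⟩ hφ.continuous.measurable
    (.of_forall hφθ) hum hP.continuous hP.2.1 (hP.exists_lastC_pos_and_ne_zero hPnz) hR huP
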